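/- arXiv:2311.08914 — 6 statements merged into one kernel-verified Lean document; each statement's English description precedes it below -/
import Mathlib

section
/- Rayleigh-quotient bound at the updated point: let θ, h ∈ E, let M ≥ 2ρ, let r* ≥ 0, and let U : E → E be a continuous linear map such that ⟨U w, w⟩ ≤ (M/2)·r*·‖w‖² for all w ∈ E. Then for every unit vector v ∈ E, ⟨∇²f(θ + h) v, v⟩ ≤ ‖∇²f(θ) − U‖ + M·‖h‖ + M·|r* − ‖h‖|, where ‖·‖ on operators denotes the operator norm. -/
open scoped RealInnerProductSpace

/-- Rayleigh-quotient bound at the updated point: if `M ≥ 2ρ`, `r* ≥ 0`,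
and `⟨U w, w⟩ ≤ (M/2)·r*·‖w‖²` for all `w`, then for every unit vector `v`,
`⟨∇²f(θ + h) v, v⟩ ≤ ‖∇²f(θ) − U‖ + M·‖h‖ + M·|r* − ‖h‖|`. -/
theorem rayleigh_bound_at_updated_point
    (d : ℕ) (hd : 1 ≤ d)
    (f : EuclideanSpace ℝ (Fin d) → ℝ) (hf : ContDiff ℝ 2 f)
    (ρ : ℝ) (hρ : 0 < ρ)
    (hLip : ∀ x y : EuclideanSpace ℝ (Fin d),
      ‖fderiv ℝ (gradient f) x - fderiv ℝ (gradient f) y‖ ≤ ρ * ‖x - y‖)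
    (θ h : EuclideanSpace ℝ (Fin d))
    (M : ℝ) (hM : 2 * ρ ≤ M)
    (rstar : ℝ) (hrstar : 0 ≤ rstar)
    (U : EuclideanSpace ℝ (Fin d) →L[ℝ] EuclideanSpace ℝ (Fin d))
    (hU : ∀ w : EuclideanSpace ℝ (Fin d), ⟪U w, w⟫ ≤ M / 2 * rstar * ‖w‖ ^ 2) :
    ∀ v : EuclideanSpace ℝ (Fin d), ‖v‖ = 1 →
      ⟪(fderiv ℝ (gradient f) (θ + h)) v, v⟫ ≤
        ‖fderiv ℝ (gradient f) θ - U‖ + M * ‖h‖ + M * |rstar - ‖h‖| := by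
  intro v hv
  have key : ∀ A : EuclideanSpace ℝ (Fin d) →L[ℝ] EuclideanSpace ℝ (Fin d),
      ⟪A v, v⟫ ≤ ‖A‖ := by
    intro A
    have h1 := real_inner_le_norm (A v) v
    have h2 := A.le_opNorm v
    rw [hv, mul_one] at h1 h2
    exact h1.trans h2
  generalize hH : fderiv ℝ (gradient f) θ = H
  have hL := hLip (θ + h) θ
  rw [hH, add_sub_cancel_left] at hL
  generalize fderiv ℝ (gradient f) (θ + h) = G at hL ⊢
  have e : ⟪G v, v⟫ = ⟪(G - H) v, v⟫ + ⟪(H - U) v, v⟫ + ⟪U v, v⟫ := by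
    simp only [ContinuousLinearMap.sub_apply, inner_sub_left]
    ring
  have k1 := key (G - H)
  have k2 := key (H - U)
  have k3 := hU v
  rw [hv] at k3
  have hn := norm_nonneg h
  have p1 : 0 ≤ (M - 2 * ρ) * ‖h‖ := mul_nonneg (by linarith) hn
  have hMp : 0 ≤ M := by linarith
  have p2 : M * (rstar - ‖h‖) ≤ M * |rstar - ‖h‖| :=
    mul_le_mul_of_nonneg_left (le_abs_self _) hMp
  have p3 : 0 ≤ M * |rstar - ‖h‖| := mul_nonneg hMp (abs_nonneg _)
  nlinarith
end

section
/- Cubed largest-eigenvalue bound at the updated point: under the same hypotheses (M ≥ 2ρ, r* ≥ 0, and ⟨U w, w⟩ ≤ (M/2)·r*·‖w‖² for all w ∈ E), one has ρ^{−3/2}·(sup_{‖v‖=1} ⟨∇²f(θ + h) v, v⟩)³ ≤ 9·ρ^{−3/2}·( ‖∇²f(θ) − U‖³ + M³·‖h‖³ + M³·|r* − ‖h‖|³ ). -/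
open scoped RealInnerProductSpace

/-- Cubed largest-eigenvalue bound at the updated point: if `M ≥ 2ρ`,
`r* ≥ 0`, and `⟨U w, w⟩ ≤ (M/2)·r*·‖w‖²` for all `w`, then
`ρ^{−3/2}·(sup_{‖v‖=1} ⟨∇²f(θ+h) v, v⟩)³ ≤ 9·ρ^{−3/2}·(‖∇²f(θ) − U‖³ + M³·‖h‖³ + M³·|r* − ‖h‖|³)`. -/
theorem lambda_max_cubed_bound_at_updated_point
    (d : ℕ) (hd : 1 ≤ d)
    (f : EuclideanSpace ℝ (Fin d) → ℝ) (hf : ContDiff ℝ 2 f)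
    (ρ : ℝ) (hρ : 0 < ρ)
    (hLip : ∀ x y : EuclideanSpace ℝ (Fin d),
      ‖fderiv ℝ (gradient f) x - fderiv ℝ (gradient f) y‖ ≤ ρ * ‖x - y‖)
    (θ h : EuclideanSpace ℝ (Fin d))
    (M : ℝ) (hM : 2 * ρ ≤ M)
    (rstar : ℝ) (hrstar : 0 ≤ rstar)
    (U : EuclideanSpace ℝ (Fin d) →L[ℝ] EuclideanSpace ℝ (Fin d))
    (hU : ∀ w : EuclideanSpace ℝ (Fin d), ⟪U w, w⟫ ≤ M / 2 * rstar * ‖w‖ ^ 2) :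
    ρ ^ (-(3 : ℝ) / 2) *
        (sSup {x : ℝ | ∃ v : EuclideanSpace ℝ (Fin d), ‖v‖ = 1 ∧
            x = ⟪(fderiv ℝ (gradient f) (θ + h)) v, v⟫}) ^ 3 ≤
      9 * ρ ^ (-(3 : ℝ) / 2) *
        (‖fderiv ℝ (gradient f) θ - U‖ ^ 3 + M ^ 3 * ‖h‖ ^ 3 +
          M ^ 3 * |rstar - ‖h‖| ^ 3) := by
  set H := fderiv ℝ (gradient f) with hH
  set A := ‖H θ - U‖ with hA
  set r := |rstar - ‖h‖| with hr
  have hA0 : 0 ≤ A := norm_nonneg _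
  have hr0 : 0 ≤ r := abs_nonneg _
  have hh0 : 0 ≤ ‖h‖ := norm_nonneg _
  have hM0 : 0 ≤ M := by linarith
  have hMh : 0 ≤ M * ‖h‖ := mul_nonneg hM0 hh0
  have hMr : 0 ≤ M * r := mul_nonneg hM0 hr0
  have hrr : rstar ≤ r + ‖h‖ := by
    have := le_abs_self (rstar - ‖h‖)
    linarith
  have hq : ∀ (T : EuclideanSpace ℝ (Fin d) →L[ℝ] EuclideanSpace ℝ (Fin d))
      (v : EuclideanSpace ℝ (Fin d)), ‖v‖ = 1 → ⟪T v, v⟫ ≤ ‖T‖ := by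
    intro T v hv
    have h1 := real_inner_le_norm (T v) v
    have h2 := T.le_opNorm v
    rw [hv, mul_one] at h1 h2
    exact h1.trans h2
  have hS : sSup {x : ℝ | ∃ v : EuclideanSpace ℝ (Fin d), ‖v‖ = 1 ∧
      x = ⟪(H (θ + h)) v, v⟫} ≤ A + M * ‖h‖ + M * r := by
    apply Real.sSup_le
    · rintro x ⟨v, hv, rfl⟩
      have e : ⟪H (θ + h) v, v⟫
          = ⟪(H (θ + h) - H θ) v, v⟫ + ⟪(H θ - U) v, v⟫ + ⟪U v, v⟫ := by
        rw [← inner_add_left, ← inner_add_left]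
        congr 1
        simp
      have h1 := hq (H (θ + h) - H θ) v hv
      have h2 := hq (H θ - U) v hv
      have h3 := hU v
      have h4 := hLip (θ + h) θ
      rw [add_sub_cancel_left] at h4
      rw [hv] at h3
      have h5 : M * rstar ≤ M * (r + ‖h‖) := mul_le_mul_of_nonneg_left hrr hM0
      have h6 : 2 * ρ * ‖h‖ ≤ M * ‖h‖ := mul_le_mul_of_nonneg_right hM hh0
      rw [e]
      linarith
    · positivity
  have hcube : ∀ a b c : ℝ, 0 ≤ a → 0 ≤ b → 0 ≤ c →
      (a + b + c) ^ 3 ≤ 9 * (a ^ 3 + b ^ 3 + c ^ 3) := by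
    intro a b c ha hb hc
    nlinarith [mul_nonneg (add_nonneg ha hb) (sq_nonneg (a - b)),
      mul_nonneg (add_nonneg hb hc) (sq_nonneg (b - c)),
      mul_nonneg (add_nonneg ha hc) (sq_nonneg (a - c)),
      mul_nonneg ha (sq_nonneg (b - c)), mul_nonneg hb (sq_nonneg (a - c)),
      mul_nonneg hc (sq_nonneg (a - b))]
  have h7 := (Odd.strictMono_pow (R := ℝ) (n := 3) (by decide)).monotone hS
  have h8 := hcube A (M * ‖h‖) (M * r) hA0 hMh hMr
  rw [mul_pow, mul_pow] at h8
  have h9 := mul_le_mul_of_nonneg_left (h7.trans h8) (Real.rpow_nonneg hρ.le (-(3 : ℝ) / 2))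
  refine h9.trans (le_of_eq ?_)
  ring
end

section
/- Gradient-norm bound at the updated point: let θ, h, v ∈ E, let U : E → E be a continuous linear map, let M ≥ 2ρ, and define the model gradient g_m = v + U h − (M/2)·‖h‖·h. Then ‖∇f(θ + h)‖ ≤ ‖∇f(θ) − v‖ + (1/M)·‖∇²f(θ) − U‖² + ‖g_m‖ + M·‖h‖². -/
open scoped RealInnerProductSpace

/-- Gradient-norm bound at the updated point: with model gradient
`g_m = v + U h − (M/2)·‖h‖·h` and `M ≥ 2ρ`,
`‖∇f(θ + h)‖ ≤ ‖∇f(θ) − v‖ + (1/M)·‖∇²f(θ) − U‖² + ‖g_m‖ + M·‖h‖²`. -/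
theorem gradient_norm_bound_at_updated_point
    (d : ℕ) (hd : 1 ≤ d)
    (f : EuclideanSpace ℝ (Fin d) → ℝ) (hf : ContDiff ℝ 2 f)
    (ρ : ℝ) (hρ : 0 < ρ)
    (hLip : ∀ x y : EuclideanSpace ℝ (Fin d),
      ‖fderiv ℝ (gradient f) x - fderiv ℝ (gradient f) y‖ ≤ ρ * ‖x - y‖)
    (θ h v : EuclideanSpace ℝ (Fin d))
    (U : EuclideanSpace ℝ (Fin d) →L[ℝ] EuclideanSpace ℝ (Fin d))
    (M : ℝ) (hM : 2 * ρ ≤ M)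
    (gm : EuclideanSpace ℝ (Fin d))
    (hgm : gm = v + U h - (M / 2 * ‖h‖) • h) :
    ‖gradient f (θ + h)‖ ≤
      ‖gradient f θ - v‖ + (1 / M) * ‖fderiv ℝ (gradient f) θ - U‖ ^ 2 +
        ‖gm‖ + M * ‖h‖ ^ 2 := by
  have hM0 : 0 < M := by linarith
  have hdiff : Differentiable ℝ (gradient f) := by
    have h1 : Differentiable ℝ (fderiv ℝ f) :=
      (hf.fderiv_right (m := 1) (by norm_num)).differentiable (by norm_num)
    exact (InnerProductSpace.toDual ℝ (EuclideanSpace ℝ (Fin d))).symm.toContinuousLinearEquiv.differentiable.comp h1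
  set H := fderiv ℝ (gradient f) θ with hH
  have hT : ‖gradient f (θ + h) - gradient f θ - H h‖ ≤ ρ / 2 * ‖h‖ ^ 2 := by
    have hF : ∀ t : ℝ, HasDerivAt (fun t : ℝ => gradient f (θ + t • h) - gradient f θ - t • H h)
        (fderiv ℝ (gradient f) (θ + t • h) h - H h) t := by
      intro t
      have h1 : HasDerivAt (fun t : ℝ => θ + t • h) h t := by
        simpa using ((hasDerivAt_id t).smul_const h).const_add θ
      have h2 := (hdiff (θ + t • h)).hasFDerivAt.comp_hasDerivAt t h1
      have h3 : HasDerivAt (fun t : ℝ => t • H h) (H h) t := by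
        simpa using (hasDerivAt_id t).smul_const (H h)
      exact (h2.sub_const (gradient f θ)).sub h3
    have hB : ∀ t : ℝ, HasDerivAt (fun t : ℝ => ρ / 2 * ‖h‖ ^ 2 * t ^ 2) (ρ * ‖h‖ ^ 2 * t) t := by
      intro t
      have := (hasDerivAt_pow 2 t).const_mul (ρ / 2 * ‖h‖ ^ 2)
      refine this.congr_deriv ?_
      push_cast
      ring
    have key := image_norm_le_of_norm_deriv_right_le_deriv_boundary (a := 0) (b := 1)
      (fun t _ => (hF t).continuousAt.continuousWithinAt)
      (fun t _ => (hF t).hasDerivWithinAt) (by simp) hB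
      (by
        intro t ht
        have h1 := (fderiv ℝ (gradient f) (θ + t • h) - H).le_opNorm h
        have h2 := hLip (θ + t • h) θ
        rw [add_sub_cancel_left, norm_smul, Real.norm_of_nonneg ht.1] at h2
        have h3 := mul_le_mul_of_nonneg_right h2 (norm_nonneg h)
        rw [sub_apply] at h1
        calc _ ≤ _ := h1
          _ ≤ _ := h3
          _ = _ := by ring)
      (Set.right_mem_Icc.2 zero_le_one)
    simpa using key
  have hdec : gradient f (θ + h) = (gradient f (θ + h) - gradient f θ - H h) + (gradient f θ - v)
      + (H - U) h + gm + (M / 2 * ‖h‖) • h := by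
    rw [hgm, sub_apply]
    abel
  have hA := (H - U).le_opNorm h
  have hs : ‖(M / 2 * ‖h‖) • h‖ = M / 2 * ‖h‖ ^ 2 := by
    rw [norm_smul, Real.norm_of_nonneg (by positivity)]
    ring
  have hy : ‖H - U‖ * ‖h‖ ≤ 1 / M * ‖H - U‖ ^ 2 + M / 4 * ‖h‖ ^ 2 := by
    have e : 1 / M * ‖H - U‖ ^ 2 + M / 4 * ‖h‖ ^ 2 - ‖H - U‖ * ‖h‖
        = 1 / M * (‖H - U‖ - M / 2 * ‖h‖) ^ 2 := by
      field_simp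
      ring
    have : 0 ≤ 1 / M * (‖H - U‖ - M / 2 * ‖h‖) ^ 2 := by positivity
    linarith
  have hr : ρ / 2 * ‖h‖ ^ 2 ≤ M / 4 * ‖h‖ ^ 2 := by
    exact mul_le_mul_of_nonneg_right (by linarith) (by positivity)
  have n1 := norm_add_le ((gradient f (θ + h) - gradient f θ - H h) + (gradient f θ - v)
      + (H - U) h + gm) ((M / 2 * ‖h‖) • h)
  have n2 := norm_add₄_le (a := gradient f (θ + h) - gradient f θ - H h) (b := gradient f θ - v)
    (c := (H - U) h) (d := gm)
  rw [← hdec] at n1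
  linarith
end

section
/- Power-3/2 gradient-norm bound at the updated point: under the same hypotheses (θ, h, v ∈ E, U : E → E continuous linear, M ≥ 2ρ, g_m = v + U h − (M/2)·‖h‖·h), one has ‖∇f(θ + h)‖^{3/2} ≤ 2·( ‖∇f(θ) − v‖^{3/2} + M^{−3/2}·‖∇²f(θ) − U‖³ + ‖g_m‖^{3/2} + M^{3/2}·‖h‖³ ). -/
open scoped RealInnerProductSpace

theorem aux_taylor {E : Type*} [NormedAddCommGroup E] [NormedSpace ℝ E]
    (G : E → E) (hG : Differentiable ℝ G) (ρ : ℝ)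
    (hLip : ∀ x y : E, ‖fderiv ℝ G x - fderiv ℝ G y‖ ≤ ρ * ‖x - y‖) (θ h : E) :
    ‖G (θ + h) - G θ - fderiv ℝ G θ h‖ ≤ ρ / 2 * ‖h‖ ^ 2 := by
  have hd : ∀ t : ℝ, HasDerivAt (fun t : ℝ => G (θ + t • h) - G θ - t • fderiv ℝ G θ h)
      (fderiv ℝ G (θ + t • h) h - fderiv ℝ G θ h) t := by
    intro t
    have h1 : HasDerivAt (fun t : ℝ => θ + t • h) h t := by
      simpa using ((hasDerivAt_id t).smul_const h).const_add θ
    have h2 := (hG (θ + t • h)).hasFDerivAt.comp_hasDerivAt t h1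
    have h3 : HasDerivAt (fun t : ℝ => t • fderiv ℝ G θ h) (fderiv ℝ G θ h) t := by
      simpa using (hasDerivAt_id t).smul_const (fderiv ℝ G θ h)
    exact (h2.sub_const (G θ)).sub h3
  have key := image_norm_le_of_norm_deriv_right_le_deriv_boundary
    (f := fun t : ℝ => G (θ + t • h) - G θ - t • fderiv ℝ G θ h)
    (f' := fun t => fderiv ℝ G (θ + t • h) h - fderiv ℝ G θ h) (a := 0) (b := 1)
    (B := fun t => ρ / 2 * ‖h‖ ^ 2 * t ^ 2) (B' := fun t => ρ * ‖h‖ ^ 2 * t)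
    (fun t _ => (hd t).continuousAt.continuousWithinAt)
    (fun t _ => (hd t).hasDerivWithinAt) (by simp)
    (fun t => by
      have h0 := (hasDerivAt_pow 2 t).const_mul (ρ / 2 * ‖h‖ ^ 2)
      have he : ρ / 2 * ‖h‖ ^ 2 * (((2 : ℕ) : ℝ) * t ^ (2 - 1)) = ρ * ‖h‖ ^ 2 * t := by
        push_cast
        ring
      rw [he] at h0
      exact h0)
    (fun t ht => by
      have h1 := (fderiv ℝ G (θ + t • h) - fderiv ℝ G θ).le_opNorm h
      have h2 := hLip (θ + t • h) θ
      rw [add_sub_cancel_left, norm_smul, Real.norm_of_nonneg ht.1] at h2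
      have h3 := mul_le_mul_of_nonneg_right h2 (norm_nonneg h)
      rw [ContinuousLinearMap.sub_apply] at h1
      calc _ ≤ _ := h1
        _ ≤ _ := h3
        _ = _ := by ring)
  have := key (Set.right_mem_Icc.2 zero_le_one)
  simpa using this

theorem aux_pow (a b c e : ℝ) (ha : 0 ≤ a) (hb : 0 ≤ b) (hc : 0 ≤ c) (he : 0 ≤ e) :
    (a + b + c + e) ^ ((3 : ℝ) / 2) ≤ 2 * (a ^ ((3 : ℝ) / 2) + b ^ ((3 : ℝ) / 2)
      + c ^ ((3 : ℝ) / 2) + e ^ ((3 : ℝ) / 2)) := by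
  have h := Real.rpow_sum_le_const_mul_sum_rpow (Finset.univ : Finset (Fin 4)) ![a, b, c, e]
    (p := (3 : ℝ) / 2) (by norm_num)
  simp only [Fin.sum_univ_four, Finset.card_univ, Fintype.card_fin] at h
  have h4 : ((4 : ℕ) : ℝ) ^ ((3 : ℝ) / 2 - 1) = 2 := by
    rw [show ((4 : ℕ) : ℝ) = 2 ^ (2 : ℝ) by norm_num, ← Real.rpow_mul (by norm_num)]
    norm_num
  rw [h4] at h
  simpa [abs_of_nonneg, ha, hb, hc, he] using h

theorem aux_sq (x : ℝ) (hx : 0 ≤ x) : (x ^ 2) ^ ((3 : ℝ) / 2) = x ^ 3 := by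
  rw [← Real.rpow_natCast x 2, ← Real.rpow_mul hx, ← Real.rpow_natCast x 3]
  norm_num

/-- Power-3/2 gradient-norm bound at the updated point: with model gradient
`g_m = v + U h − (M/2)·‖h‖·h` and `M ≥ 2ρ`,
`‖∇f(θ + h)‖^{3/2} ≤ 2·(‖∇f(θ) − v‖^{3/2} + M^{−3/2}·‖∇²f(θ) − U‖³ + ‖g_m‖^{3/2} + M^{3/2}·‖h‖³)`. -/
theorem gradient_norm_pow_bound_at_updated_point
    (d : ℕ) (hd : 1 ≤ d)
    (f : EuclideanSpace ℝ (Fin d) → ℝ) (hf : ContDiff ℝ 2 f)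
    (ρ : ℝ) (hρ : 0 < ρ)
    (hLip : ∀ x y : EuclideanSpace ℝ (Fin d),
      ‖fderiv ℝ (gradient f) x - fderiv ℝ (gradient f) y‖ ≤ ρ * ‖x - y‖)
    (θ h v : EuclideanSpace ℝ (Fin d))
    (U : EuclideanSpace ℝ (Fin d) →L[ℝ] EuclideanSpace ℝ (Fin d))
    (M : ℝ) (hM : 2 * ρ ≤ M)
    (gm : EuclideanSpace ℝ (Fin d))
    (hgm : gm = v + U h - (M / 2 * ‖h‖) • h) :
    ‖gradient f (θ + h)‖ ^ ((3 : ℝ) / 2) ≤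
      2 * (‖gradient f θ - v‖ ^ ((3 : ℝ) / 2) +
        M ^ (-(3 : ℝ) / 2) * ‖fderiv ℝ (gradient f) θ - U‖ ^ 3 +
        ‖gm‖ ^ ((3 : ℝ) / 2) + M ^ ((3 : ℝ) / 2) * ‖h‖ ^ 3) := by
  have hM0 : 0 < M := by linarith
  have hG : Differentiable ℝ (gradient f) := by
    have h1 : Differentiable ℝ (fderiv ℝ f) :=
      (hf.fderiv_right (m := 1) (by norm_num)).differentiable (by norm_num)
    exact (InnerProductSpace.toDual ℝ (EuclideanSpace ℝ (Fin d))).symm.toContinuousLinearEquiv.differentiable.comp h1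
  have hT := aux_taylor (gradient f) hG ρ hLip θ h
  set H := fderiv ℝ (gradient f) θ with hH
  have hdec : gradient f (θ + h) = (gradient f θ - v) + (H - U) h + gm + (M / 2 * ‖h‖) • h
      + (gradient f (θ + h) - gradient f θ - H h) := by
    rw [hgm, ContinuousLinearMap.sub_apply]; abel
  have h1 : ‖(H - U) h‖ ≤ ‖H - U‖ * ‖h‖ := (H - U).le_opNorm h
  have h2 : ‖(M / 2 * ‖h‖) • h‖ = M / 2 * ‖h‖ ^ 2 := by
    rw [norm_smul, Real.norm_of_nonneg (by positivity)]; ring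
  have h3 : ρ / 2 * ‖h‖ ^ 2 ≤ M / 4 * ‖h‖ ^ 2 :=
    mul_le_mul_of_nonneg_right (by linarith) (by positivity)
  have h4 : ‖H - U‖ * ‖h‖ ≤ M⁻¹ * ‖H - U‖ ^ 2 + M / 4 * ‖h‖ ^ 2 := by
    have : M⁻¹ * ‖H - U‖ ^ 2 + M / 4 * ‖h‖ ^ 2 - ‖H - U‖ * ‖h‖
        = M⁻¹ * (‖H - U‖ - M / 2 * ‖h‖) ^ 2 := by
      field_simp; ring
    have h5 : 0 ≤ M⁻¹ * (‖H - U‖ - M / 2 * ‖h‖) ^ 2 := by positivity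
    linarith
  have hN : ‖gradient f (θ + h)‖ ≤ ‖gradient f θ - v‖ + M⁻¹ * ‖H - U‖ ^ 2 + ‖gm‖
      + M * ‖h‖ ^ 2 := by
    have t1 := norm_add_le ((gradient f θ - v) + (H - U) h + gm + (M / 2 * ‖h‖) • h)
      (gradient f (θ + h) - gradient f θ - H h)
    rw [← hdec] at t1
    have t2 := norm_add_le ((gradient f θ - v) + (H - U) h + gm) ((M / 2 * ‖h‖) • h)
    have t3 := norm_add₃_le (a := gradient f θ - v) (b := (H - U) h) (c := gm)
    linarith
  refine (Real.rpow_le_rpow (norm_nonneg _) hN (by norm_num)).trans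
    ((aux_pow _ _ _ _ (norm_nonneg _) (by positivity) (norm_nonneg _) (by positivity)).trans_eq ?_)
  rw [Real.mul_rpow (by positivity) (by positivity), Real.mul_rpow (by positivity) (by positivity),
    aux_sq _ (norm_nonneg _), aux_sq _ (norm_nonneg _), Real.inv_rpow hM0.le,
    ← Real.rpow_neg hM0.le, neg_div]
end

section
/- Second-order stationarity measure bound at the updated point: let θ, h, v ∈ E, let r* ≥ 0, let M ≥ 4ρ, and let U : E → E be a continuous linear map with ⟨U w, w⟩ ≤ (M/2)·r*·‖w‖² for all w ∈ E; set g_m = v + U h − (M/2)·‖h‖·h. Then μ(θ + h) ≤ 9·( M³·ρ^{−3/2}·‖h‖³ + M^{3/2}·ρ^{−3/2}·‖∇f(θ) − v‖^{3/2} + ρ^{−3/2}·‖∇²f(θ) − U‖³ + M^{3/2}·ρ^{−3/2}·‖g_m‖^{3/2} + M³·ρ^{−3/2}·|‖h‖ − r*|³ ). -/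
open scoped RealInnerProductSpace

/-- Second-order stationarity measure bound at the updated point: with
`μ(x) = max(‖∇f(x)‖^{3/2}, λ_max(∇²f(x))³/ρ^{3/2})`, `M ≥ 4ρ`, `r* ≥ 0`,
`⟨U w, w⟩ ≤ (M/2)·r*·‖w‖²` for all `w`, and `g_m = v + U h − (M/2)·‖h‖·h`, one has
`μ(θ + h) ≤ 9·(M³·ρ^{−3/2}·‖h‖³ + M^{3/2}·ρ^{−3/2}·‖∇f(θ) − v‖^{3/2}
  + ρ^{−3/2}·‖∇²f(θ) − U‖³ + M^{3/2}·ρ^{−3/2}·‖g_m‖^{3/2} + M³·ρ^{−3/2}·|‖h‖ − r*|³)`. -/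
theorem sosp_measure_bound_at_updated_point
    (d : ℕ) (hd : 1 ≤ d)
    (f : EuclideanSpace ℝ (Fin d) → ℝ) (hf : ContDiff ℝ 2 f)
    (ρ : ℝ) (hρ : 0 < ρ)
    (hLip : ∀ x y : EuclideanSpace ℝ (Fin d),
      ‖fderiv ℝ (gradient f) x - fderiv ℝ (gradient f) y‖ ≤ ρ * ‖x - y‖)
    (lamMax : EuclideanSpace ℝ (Fin d) → ℝ)
    (hlamMax : ∀ x, lamMax x = sSup {l : ℝ | ∃ w : EuclideanSpace ℝ (Fin d), ‖w‖ = 1 ∧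
        l = ⟪(fderiv ℝ (gradient f) x) w, w⟫})
    (μ : EuclideanSpace ℝ (Fin d) → ℝ)
    (hμ : ∀ x, μ x = max (‖gradient f x‖ ^ ((3 : ℝ) / 2))
        ((lamMax x) ^ 3 / ρ ^ ((3 : ℝ) / 2)))
    (θ h v : EuclideanSpace ℝ (Fin d))
    (rstar : ℝ) (hrstar : 0 ≤ rstar)
    (M : ℝ) (hM : 4 * ρ ≤ M)
    (U : EuclideanSpace ℝ (Fin d) →L[ℝ] EuclideanSpace ℝ (Fin d))
    (hU : ∀ w : EuclideanSpace ℝ (Fin d), ⟪U w, w⟫ ≤ M / 2 * rstar * ‖w‖ ^ 2)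
    (gm : EuclideanSpace ℝ (Fin d))
    (hgm : gm = v + U h - (M / 2 * ‖h‖) • h) :
    μ (θ + h) ≤
      9 * (M ^ 3 * ρ ^ (-(3 : ℝ) / 2) * ‖h‖ ^ 3 +
        M ^ ((3 : ℝ) / 2) * ρ ^ (-(3 : ℝ) / 2) * ‖gradient f θ - v‖ ^ ((3 : ℝ) / 2) +
        ρ ^ (-(3 : ℝ) / 2) * ‖fderiv ℝ (gradient f) θ - U‖ ^ 3 +
        M ^ ((3 : ℝ) / 2) * ρ ^ (-(3 : ℝ) / 2) * ‖gm‖ ^ ((3 : ℝ) / 2) +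
        M ^ 3 * ρ ^ (-(3 : ℝ) / 2) * |‖h‖ - rstar| ^ 3) := by
  have hM0 : 0 < M := by linarith
  have hg : Differentiable ℝ (gradient f) := by
    have h1 : ContDiff ℝ 1 (fderiv ℝ f) := hf.fderiv_right (by norm_num)
    have h2 : Differentiable ℝ (fderiv ℝ f) := h1.differentiable (by norm_num)
    exact fun x => ((InnerProductSpace.toDual ℝ
      (EuclideanSpace ℝ (Fin d))).symm.toContinuousLinearEquiv.differentiableAt).comp x (h2 x)
  have hr : 0 ≤ ‖h‖ := norm_nonneg h
  have hb : 0 ≤ ‖fderiv ℝ (gradient f) θ - U‖ := norm_nonneg _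
  have htay : ‖gradient f (θ + h) - gradient f θ - fderiv ℝ (gradient f) θ h‖ ≤ ρ * ‖h‖ * ‖h‖ := by
    have := (convex_closedBall θ ‖h‖).norm_image_sub_le_of_norm_fderiv_le' (𝕜 := ℝ)
      (f := gradient f) (φ := fderiv ℝ (gradient f) θ) (C := ρ * ‖h‖) (x := θ) (y := θ + h)
      (fun x _ => hg x)
      (fun x hx => (hLip x θ).trans (by
        have : ‖x - θ‖ ≤ ‖h‖ := by simpa [dist_eq_norm] using hx
        gcongr))
      (by simp) (by simp)
    simpa using this
  have hG : ‖gradient f (θ + h)‖ ≤ ρ * ‖h‖ * ‖h‖ + ‖gradient f θ - v‖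
      + ‖fderiv ℝ (gradient f) θ - U‖ * ‖h‖ + ‖gm‖ + M / 2 * ‖h‖ * ‖h‖ := by
    have e : gradient f (θ + h) = (gradient f (θ + h) - gradient f θ - fderiv ℝ (gradient f) θ h)
        + (gradient f θ - v) + (fderiv ℝ (gradient f) θ - U) h + gm + (M / 2 * ‖h‖) • h := by
      rw [hgm, sub_apply]; abel
    have e1 := (fderiv ℝ (gradient f) θ - U).le_opNorm h
    have e2 : ‖(M / 2 * ‖h‖) • h‖ = M / 2 * ‖h‖ * ‖h‖ := by
      rw [norm_smul, Real.norm_of_nonneg (by positivity)]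
    rw [e]
    refine (norm_add_le _ _).trans (add_le_add ?_ e2.le)
    refine (norm_add_le _ _).trans (add_le_add ?_ le_rfl)
    refine (norm_add_le _ _).trans (add_le_add ?_ e1)
    exact (norm_add_le _ _).trans (add_le_add htay le_rfl)
  have hL : lamMax (θ + h) ≤ ρ * ‖h‖ + ‖fderiv ℝ (gradient f) θ - U‖ + M / 2 * rstar := by
    rw [hlamMax]
    refine Real.sSup_le ?_ (by positivity)
    rintro l ⟨w, hw, rfl⟩
    have e : ⟪(fderiv ℝ (gradient f) (θ + h)) w, w⟫ =
        ⟪(fderiv ℝ (gradient f) (θ + h) - fderiv ℝ (gradient f) θ) w, w⟫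
        + ⟪(fderiv ℝ (gradient f) θ - U) w, w⟫ + ⟪U w, w⟫ := by
      simp only [sub_apply, inner_sub_left]; ring
    have key : ∀ T : EuclideanSpace ℝ (Fin d) →L[ℝ] EuclideanSpace ℝ (Fin d),
        ⟪T w, w⟫ ≤ ‖T‖ := fun T => by
      have h1 := real_inner_le_norm (T w) w
      have h2 := T.le_opNorm w
      rw [hw, mul_one] at h1 h2
      exact h1.trans h2
    have e1 := hLip (θ + h) θ
    have e2 := hU w
    rw [hw] at e2
    rw [add_sub_cancel_left] at e1
    rw [e]
    have := key (fderiv ℝ (gradient f) (θ + h) - fderiv ℝ (gradient f) θ)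
    have := key (fderiv ℝ (gradient f) θ - U)
    linarith
  have hneg : ρ ^ (-(3 : ℝ) / 2) = (ρ ^ ((3 : ℝ) / 2))⁻¹ := by
    rw [neg_div, Real.rpow_neg hρ.le]
  rw [hμ]
  generalize ‖fderiv ℝ (gradient f) θ - U‖ = b at *
  have ha : 0 ≤ ‖gradient f θ - v‖ := norm_nonneg _
  generalize ‖gradient f θ - v‖ = a at *
  have hgn : 0 ≤ ‖gm‖ := norm_nonneg _
  generalize ‖gm‖ = g at *
  have hG0 : 0 ≤ ‖gradient f (θ + h)‖ := norm_nonneg _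
  generalize ‖gradient f (θ + h)‖ = G at *
  generalize ‖h‖ = r at *
  generalize lamMax (θ + h) = L at *
  have he0 : 0 ≤ |r - rstar| := abs_nonneg _
  have he : rstar ≤ r + |r - rstar| := by linarith [neg_abs_le (r - rstar)]
  generalize |r - rstar| = e at *
  rw [hneg]
  have hP : 0 < (ρ ^ ((3 : ℝ) / 2))⁻¹ := by positivity
  have hMP : 0 < M ^ ((3 : ℝ) / 2) := by positivity
  have cube : ∀ x : ℝ, 0 ≤ x → (x ^ 2) ^ ((3 : ℝ) / 2) = x ^ 3 := fun x hx => by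
    rw [← Real.rpow_natCast, ← Real.rpow_mul hx, ← Real.rpow_natCast]; norm_num
  have t1 : 0 ≤ M ^ 3 * (ρ ^ ((3 : ℝ) / 2))⁻¹ * r ^ 3 := by positivity
  have t2 : 0 ≤ M ^ ((3 : ℝ) / 2) * (ρ ^ ((3 : ℝ) / 2))⁻¹ * a ^ ((3 : ℝ) / 2) := by positivity
  have t3 : 0 ≤ (ρ ^ ((3 : ℝ) / 2))⁻¹ * b ^ 3 := by positivity
  have t4 : 0 ≤ M ^ ((3 : ℝ) / 2) * (ρ ^ ((3 : ℝ) / 2))⁻¹ * g ^ ((3 : ℝ) / 2) := by positivity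
  have t5 : 0 ≤ M ^ 3 * (ρ ^ ((3 : ℝ) / 2))⁻¹ * e ^ 3 := by positivity
  refine max_le ?_ ?_
  · -- gradient part
    have hbr : b * r ≤ (M * r ^ 2 + b ^ 2 / M) / 2 := by
      have h0 : 0 ≤ (M * r - b) ^ 2 / M := by positivity
      have h1 : (M * r - b) ^ 2 / M = M * r ^ 2 - 2 * (b * r) + b ^ 2 / M := by
        field_simp; ring
      linarith
    have hρr : ρ * r * r ≤ M / 4 * r ^ 2 := by nlinarith [sq_nonneg r]
    have hB : 0 ≤ b ^ 2 / M := by positivity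
    have hA : 0 ≤ M * r ^ 2 := by positivity
    have hsum : G ≤ 5 / 4 * (M * r ^ 2) + a + g + (b ^ 2 / M) / 2 := by nlinarith
    have step : ∀ x : ℝ, 0 ≤ x → G ≤ 4 * x → G ^ ((3 : ℝ) / 2) ≤
        M ^ ((3 : ℝ) / 2) * (ρ ^ ((3 : ℝ) / 2))⁻¹ * x ^ ((3 : ℝ) / 2) := fun x hx hGx => by
      have h4 : 4 ≤ M / ρ := by rw [le_div_iff₀ hρ]; exact hM
      have h5 : G ≤ M / ρ * x := hGx.trans (by gcongr)
      calc G ^ ((3 : ℝ) / 2) ≤ (M / ρ * x) ^ ((3 : ℝ) / 2) :=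
            Real.rpow_le_rpow hG0 h5 (by norm_num)
        _ = _ := by
            rw [Real.mul_rpow (by positivity) hx, Real.div_rpow hM0.le hρ.le, div_eq_mul_inv]
    have hcase : G ≤ 4 * (M * r ^ 2) ∨ G ≤ 4 * a ∨ G ≤ 4 * g ∨ G ≤ 4 * (b ^ 2 / M) := by
      by_contra! hc
      obtain ⟨c1, c2, c3, c4⟩ := hc
      linarith
    rcases hcase with hc | hc | hc | hc
    · have h1 := step _ hA hc
      have h2 : M ^ ((3 : ℝ) / 2) * (ρ ^ ((3 : ℝ) / 2))⁻¹ * (M * r ^ 2) ^ ((3 : ℝ) / 2) =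
          M ^ 3 * (ρ ^ ((3 : ℝ) / 2))⁻¹ * r ^ 3 := by
        rw [Real.mul_rpow hM0.le (by positivity), cube r hr, ← cube M hM0.le, sq M,
          Real.mul_rpow hM0.le hM0.le]
        ring
      linarith
    · have h1 := step _ ha hc
      linarith
    · have h1 := step _ hgn hc
      linarith
    · have h1 := step _ hB hc
      have h2 : M ^ ((3 : ℝ) / 2) * (ρ ^ ((3 : ℝ) / 2))⁻¹ * (b ^ 2 / M) ^ ((3 : ℝ) / 2) =
          (ρ ^ ((3 : ℝ) / 2))⁻¹ * b ^ 3 := by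
        rw [Real.div_rpow (by positivity) hM0.le, cube b hb]
        field_simp
      linarith
  · -- eigenvalue part
    have hL2 : L ≤ M * r + b + M * e := by nlinarith
    have h3 : L ^ 3 ≤ (M * r + b + M * e) ^ 3 :=
      (Odd.strictMono_pow (by decide : Odd 3)).monotone hL2
    have h4 : ∀ x y z : ℝ, 0 ≤ x → 0 ≤ y → 0 ≤ z →
        (x + y + z) ^ 3 ≤ 9 * (x ^ 3 + y ^ 3 + z ^ 3) := fun x y z hx hy hz => by
      nlinarith [mul_nonneg (add_nonneg hx hy) (sq_nonneg (x - y)),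
        mul_nonneg (add_nonneg hy hz) (sq_nonneg (y - z)),
        mul_nonneg (add_nonneg hx hz) (sq_nonneg (x - z)),
        mul_nonneg hx (sq_nonneg (y - z)), mul_nonneg hy (sq_nonneg (x - z)),
        mul_nonneg hz (sq_nonneg (x - y))]
    have h5 := h3.trans (h4 (M * r) b (M * e) (by positivity) hb (by positivity))
    have h6 := mul_le_mul_of_nonneg_right h5 hP.le
    rw [div_eq_mul_inv]
    refine h6.trans ?_
    rw [mul_pow, mul_pow]
    linarith
end

section
/- Cubic-regularized ascent inequality with inexact derivatives: let θ, h, v ∈ E, let U : E → E be a continuous linear map, set M = 4ρ and define the model value m(h) = ⟨v, h⟩ + (1/2)·⟨U h, h⟩ − (M/6)·‖h‖³. Then f(θ + h) ≥ f(θ) + m(h) − (6/(5·√ρ))·‖∇f(θ) − v‖^{3/2} − (10/ρ²)·‖∇²f(θ) − U‖³ + (ρ/4)·‖h‖³. -/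
open scoped RealInnerProductSpace

theorem aux_mono (p p' : ℝ → ℝ) (hp : ∀ t, HasDerivAt p (p' t) t)
    (hn : ∀ t, 0 ≤ t → 0 ≤ p' t) (t : ℝ) (ht : 0 ≤ t) : p 0 ≤ p t := by
  have hm : MonotoneOn p (Set.Ici 0) := by
    apply monotoneOn_of_deriv_nonneg (convex_Ici 0)
    · exact fun x _ => (hp x).continuousAt.continuousWithinAt
    · exact fun x _ => (hp x).differentiableAt.differentiableWithinAt
    · intro x hx
      rw [(hp x).deriv]
      rw [interior_Ici] at hx
      exact hn x (le_of_lt hx)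
  exact hm (Set.mem_Ici.2 le_rfl) ht ht

theorem aux_taylor_s15 (d : ℕ)
    (f : EuclideanSpace ℝ (Fin d) → ℝ) (hf : ContDiff ℝ 2 f)
    (ρ : ℝ)
    (hLip : ∀ x y : EuclideanSpace ℝ (Fin d),
      ‖fderiv ℝ (gradient f) x - fderiv ℝ (gradient f) y‖ ≤ ρ * ‖x - y‖)
    (θ h : EuclideanSpace ℝ (Fin d)) :
    f θ + ⟪gradient f θ, h⟫ + (1 / 2) * ⟪fderiv ℝ (gradient f) θ h, h⟫ - ρ / 6 * ‖h‖ ^ 3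
      ≤ f (θ + h) := by
  have hgd : Differentiable ℝ (gradient f) := by
    have h1 : Differentiable ℝ (fderiv ℝ f) :=
      (hf.fderiv_right (m := 1) (by norm_num)).differentiable (by norm_num)
    exact (InnerProductSpace.toDual ℝ
      (EuclideanSpace ℝ (Fin d))).symm.toContinuousLinearEquiv.differentiable.comp h1
  have hfd : Differentiable ℝ f := hf.differentiable (by norm_num)
  have hline : ∀ t : ℝ, HasDerivAt (fun t : ℝ => θ + t • h) h t := by
    intro t
    simpa using ((hasDerivAt_id t).smul_const h).const_add θ
  have hg1 : ∀ t : ℝ, HasDerivAt (fun t : ℝ => f (θ + t • h)) ⟪gradient f (θ + t • h), h⟫ t := by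
    intro t
    have := (hfd (θ + t • h)).hasGradientAt.hasFDerivAt.comp_hasDerivAt t (hline t)
    exact this
  have hg2 : ∀ t : ℝ, HasDerivAt (fun t : ℝ => ⟪gradient f (θ + t • h), h⟫)
      ⟪fderiv ℝ (gradient f) (θ + t • h) h, h⟫ t := by
    intro t
    have := ((hgd (θ + t • h)).hasFDerivAt.comp_hasDerivAt t (hline t)).inner ℝ
      (hasDerivAt_const t h)
    simpa using this
  set c := ⟪fderiv ℝ (gradient f) θ h, h⟫ with hc
  have hlow : ∀ t : ℝ, 0 ≤ t →
      0 ≤ ⟪fderiv ℝ (gradient f) (θ + t • h) h, h⟫ - c + ρ * t * ‖h‖ ^ 3 := by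
    intro t ht
    have e : ⟪fderiv ℝ (gradient f) (θ + t • h) h, h⟫ - c
        = ⟪(fderiv ℝ (gradient f) (θ + t • h) - fderiv ℝ (gradient f) θ) h, h⟫ := by
      rw [hc, sub_apply, inner_sub_left]
    have h1 := hLip (θ + t • h) θ
    rw [add_sub_cancel_left, norm_smul, Real.norm_of_nonneg ht] at h1
    have h2 := abs_real_inner_le_norm
      ((fderiv ℝ (gradient f) (θ + t • h) - fderiv ℝ (gradient f) θ) h) h
    have h3 := (fderiv ℝ (gradient f) (θ + t • h) - fderiv ℝ (gradient f) θ).le_of_opNorm_le h1 h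
    have h4 := mul_le_mul_of_nonneg_right h3 (norm_nonneg h)
    have h5 := (abs_le.1 (h2.trans h4)).1
    rw [e]
    linarith [show ρ * (t * ‖h‖) * ‖h‖ * ‖h‖ = ρ * t * ‖h‖ ^ 3 by ring]
  have hq := aux_mono
    (fun t => ⟪gradient f (θ + t • h), h⟫ - t * c + ρ * ‖h‖ ^ 3 / 2 * t ^ 2)
    (fun t => ⟪fderiv ℝ (gradient f) (θ + t • h) h, h⟫ - c + ρ * t * ‖h‖ ^ 3)
    (by
      intro t
      have := ((hg2 t).sub ((hasDerivAt_id t).mul_const c)).add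
        ((hasDerivAt_pow 2 t).const_mul (ρ * ‖h‖ ^ 3 / 2))
      refine this.congr_deriv ?_
      push_cast
      ring) hlow
  have hp := aux_mono
    (fun t => f (θ + t • h) - t * ⟪gradient f θ, h⟫ - t ^ 2 * (c / 2)
      + ρ * ‖h‖ ^ 3 / 6 * t ^ 3)
    (fun t => ⟪gradient f (θ + t • h), h⟫ - ⟪gradient f θ, h⟫ - t * c
      + ρ * ‖h‖ ^ 3 / 2 * t ^ 2)
    (by
      intro t
      have := (((hg1 t).sub ((hasDerivAt_id t).mul_const ⟪gradient f θ, h⟫)).sub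
        ((hasDerivAt_pow 2 t).mul_const (c / 2))).add
        ((hasDerivAt_pow 3 t).const_mul (ρ * ‖h‖ ^ 3 / 6))
      refine this.congr_deriv ?_
      push_cast
      ring)
    (by
      intro t ht
      have := hq t ht
      simp only [zero_smul, add_zero, zero_mul, sub_zero, ne_eq, OfNat.ofNat_ne_zero,
        not_false_eq_true, zero_pow, mul_zero] at this
      linarith) 1 zero_le_one
  simp only [zero_smul, one_smul, add_zero, zero_mul, one_mul, sub_zero, ne_eq,
    OfNat.ofNat_ne_zero, not_false_eq_true, zero_pow, mul_zero, one_pow, mul_one] at hp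
  linarith

theorem aux_young1 (ρ a r : ℝ) (hρ : 0 < ρ) (ha : 0 ≤ a) (hr : 0 ≤ r) :
    a * r ≤ ρ / 8 * r ^ 3 + (6 / (5 * Real.sqrt ρ)) * a ^ ((3 : ℝ) / 2) := by
  obtain ⟨t, ht, rfl⟩ : ∃ t : ℝ, 0 < t ∧ ρ = t ^ 2 :=
    ⟨Real.sqrt ρ, Real.sqrt_pos.2 hρ, (Real.sq_sqrt hρ.le).symm⟩
  obtain ⟨s, hs, rfl⟩ : ∃ s : ℝ, 0 ≤ s ∧ a = s ^ 2 :=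
    ⟨Real.sqrt a, Real.sqrt_nonneg a, (Real.sq_sqrt ha).symm⟩
  have e : (s ^ 2) ^ ((3 : ℝ) / 2) = s ^ 3 := by
    rw [← Real.rpow_natCast, ← Real.rpow_mul hs, ← Real.rpow_natCast]
    norm_num
  rw [e, Real.sqrt_sq ht.le]
  have key : ∀ x : ℝ, 0 ≤ x → s ^ 2 * x ≤ x ^ 3 / 8 + 6 / 5 * s ^ 3 := by
    intro x hx
    have h1 : 0 ≤ (x - 5 / 3 * s) ^ 2 * (x + 10 / 3 * s) := by positivity
    have h2 : 0 ≤ s ^ 2 * x := by positivity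
    have h3 : 0 ≤ s ^ 3 := by positivity
    nlinarith
  have k := key (t * r) (by positivity)
  have e2 : t ^ 2 / 8 * r ^ 3 + 6 / (5 * t) * s ^ 3 - s ^ 2 * r
      = ((t * r) ^ 3 / 8 + 6 / 5 * s ^ 3 - s ^ 2 * (t * r)) / t := by
    field_simp
  have : 0 ≤ ((t * r) ^ 3 / 8 + 6 / 5 * s ^ 3 - s ^ 2 * (t * r)) / t :=
    div_nonneg (by linarith) ht.le
  linarith

theorem aux_young2 (ρ b r : ℝ) (hρ : 0 < ρ) (hb : 0 ≤ b) (hr : 0 ≤ r) :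
    b * r ^ 2 / 2 ≤ ρ / 8 * r ^ 3 + (10 / ρ ^ 2) * b ^ 3 := by
  have key : ∀ y : ℝ, 0 ≤ y → b * y ^ 2 / 2 ≤ y ^ 3 / 8 + 10 * b ^ 3 := by
    intro y hy
    have h3 : 0 ≤ b ^ 3 := by positivity
    rcases le_total (4 * b) y with h | h
    · nlinarith [mul_nonneg (sq_nonneg y) (sub_nonneg.2 h)]
    · have h1 : 0 ≤ (y - 8 / 3 * b) ^ 2 * (y + 4 / 3 * b) := by positivity
      nlinarith
  have k := key (ρ * r) (by positivity)
  have e2 : ρ / 8 * r ^ 3 + (10 / ρ ^ 2) * b ^ 3 - b * r ^ 2 / 2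
      = ((ρ * r) ^ 3 / 8 + 10 * b ^ 3 - b * (ρ * r) ^ 2 / 2) / ρ ^ 2 := by
    field_simp
  have : 0 ≤ ((ρ * r) ^ 3 / 8 + 10 * b ^ 3 - b * (ρ * r) ^ 2 / 2) / ρ ^ 2 :=
    div_nonneg (by linarith) (by positivity)
  linarith

/-- Cubic-regularized ascent inequality with inexact derivatives: with
`M = 4ρ` and `m(h) = ⟨v, h⟩ + (1/2)·⟨U h, h⟩ − (M/6)·‖h‖³`, one has
`f(θ + h) ≥ f(θ) + m(h) − (6/(5·√ρ))·‖∇f(θ) − v‖^{3/2} − (10/ρ²)·‖∇²f(θ) − U‖³ + (ρ/4)·‖h‖³`. -/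
theorem cubic_regularized_ascent_inequality
    (d : ℕ) (hd : 1 ≤ d)
    (f : EuclideanSpace ℝ (Fin d) → ℝ) (hf : ContDiff ℝ 2 f)
    (ρ : ℝ) (hρ : 0 < ρ)
    (hLip : ∀ x y : EuclideanSpace ℝ (Fin d),
      ‖fderiv ℝ (gradient f) x - fderiv ℝ (gradient f) y‖ ≤ ρ * ‖x - y‖)
    (θ h v : EuclideanSpace ℝ (Fin d))
    (U : EuclideanSpace ℝ (Fin d) →L[ℝ] EuclideanSpace ℝ (Fin d))
    (M : ℝ) (hM : M = 4 * ρ)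
    (m : EuclideanSpace ℝ (Fin d) → ℝ)
    (hm : ∀ h' : EuclideanSpace ℝ (Fin d),
      m h' = ⟪v, h'⟫ + (1 / 2) * ⟪U h', h'⟫ - (M / 6) * ‖h'‖ ^ 3) :
    f (θ + h) ≥ f θ + m h -
        (6 / (5 * Real.sqrt ρ)) * ‖gradient f θ - v‖ ^ ((3 : ℝ) / 2) -
        (10 / ρ ^ 2) * ‖fderiv ℝ (gradient f) θ - U‖ ^ 3 +
        (ρ / 4) * ‖h‖ ^ 3 := by
  have hT := aux_taylor_s15 d f hf ρ hLip θ h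
  have y1 := aux_young1 ρ ‖gradient f θ - v‖ ‖h‖ hρ (norm_nonneg _) (norm_nonneg _)
  have y2 := aux_young2 ρ ‖fderiv ℝ (gradient f) θ - U‖ ‖h‖ hρ (norm_nonneg _) (norm_nonneg _)
  have i1 := (abs_le.1 (abs_real_inner_le_norm (gradient f θ - v) h)).1
  have i2 := (abs_le.1 ((abs_real_inner_le_norm ((fderiv ℝ (gradient f) θ - U) h) h).trans
    (mul_le_mul_of_nonneg_right ((fderiv ℝ (gradient f) θ - U).le_opNorm h) (norm_nonneg h)))).1
  rw [inner_sub_left] at i1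
  rw [sub_apply, inner_sub_left] at i2
  rw [hm, hM]
  nlinarith
end
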